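/- Let X and Y be metric spaces, ι: X → Y an isometric embedding, and κ: X → L^∞(X) the Kuratowski embedding. Let γ be a Lipschitz loop in X and suppose φ: D² → Y is a singular Lipschitz disc bounding ι∘γ. Then there exists a singular Lipschitz disc φ': D² → L^∞(X) bounding κ∘γ such that Area(φ') ≤ Area(φ) and, moreover, sup_{w ∈ D²} dist(φ'(w), κ(γ([0,1]))) ≤ sup_{w ∈ D²} dist(φ(w), ι(γ([0,1]))). In particular, both the least filling area and the least filling radius of a loop of X among all metric spaces isometrically containing X are attained (up to no loss) in L^∞(X). -/

import Mathlib

open scoped NNReal ENNReal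
open MeasureTheory Filter

universe u v

namespace SharpIsop

/-- The closed unit disc `D² ⊂ ℝ²`. -/
def D2 : Set (ℝ × ℝ) := {p | p.1 ^ 2 + p.2 ^ 2 ≤ 1}

/-- The length (total variation over `[0,1]`) of a curve `γ : [0,1] → X`. -/
noncomputable def loopLength {X : Type u} [PseudoEMetricSpace X] (γ : ℝ → X) : ℝ :=
  (eVariationOn γ (Set.Icc 0 1)).toReal

/-- A Lipschitz loop in `X`: a Lipschitz map `γ : [0,1] → X` with `γ 0 = γ 1`. -/
def IsLipLoop {X : Type u} [PseudoEMetricSpace X] (γ : ℝ → X) : Prop :=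
  (∃ K : ℝ≥0, LipschitzOnWith K γ (Set.Icc 0 1)) ∧ γ 0 = γ 1

/-- The metric (directional) derivative of `φ : ℝ² → X` at `x` in direction `v`,
defined via a `limsup` so that it is everywhere defined (and agrees a.e. with the
limit when the latter exists). -/
noncomputable def mder {X : Type u} [PseudoMetricSpace X] (φ : ℝ × ℝ → X)
    (x v : ℝ × ℝ) : ℝ :=
  Filter.limsup (fun r : ℝ => dist (φ (x + r • v)) (φ x) / r) (nhdsWithin 0 (Set.Ioi 0))

/-- The Jacobian of a (semi)norm `s` on `ℝ²`:  `π / Leb²({v : s v ≤ 1})` if this set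
has finite measure, `0` otherwise. -/
noncomputable def jac2 (s : ℝ × ℝ → ℝ) : ℝ :=
  if volume {v : ℝ × ℝ | s v ≤ 1} < ⊤ then
    Real.pi / (volume {v : ℝ × ℝ | s v ≤ 1}).toReal
  else 0

/-- The parametrized (Hausdorff) area of a map `φ : D² → X`. -/
noncomputable def lipArea {X : Type u} [PseudoMetricSpace X] (φ : ℝ × ℝ → X) : ℝ :=
  ∫ x in D2, jac2 (mder φ x)

/-- `φ : D² → X` is a singular Lipschitz disc bounding the loop `γ : [0,1] → X`. -/
def BoundsLoop {X : Type u} [PseudoMetricSpace X] (φ : ℝ × ℝ → X) (γ : ℝ → X) : Prop :=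
  (∃ K : ℝ≥0, LipschitzOnWith K φ D2) ∧
    ∀ s ∈ Set.Icc (0:ℝ) 1, φ (Real.cos (2 * Real.pi * s), Real.sin (2 * Real.pi * s)) = γ s

/-- `g : [0, d x y] → X` is a geodesic from `x` to `y`. -/
def IsGeodesicSeg {X : Type u} [MetricSpace X] (x y : X) (g : ℝ → X) : Prop :=
  g 0 = x ∧ g (dist x y) = y ∧
    ∀ s ∈ Set.Icc (0:ℝ) (dist x y), ∀ t ∈ Set.Icc (0:ℝ) (dist x y),
      dist (g s) (g t) = |s - t|

/-- A geodesic metric space: any two points are joined by a geodesic. -/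
def GeodesicSpace (X : Type u) [MetricSpace X] : Prop :=
  ∀ x y : X, ∃ g : ℝ → X, IsGeodesicSeg x y g

/-- Gromov hyperbolicity via δ-slim geodesic triangles. -/
def GromovHyperbolic (X : Type u) [MetricSpace X] : Prop :=
  ∃ δ : ℝ, 0 ≤ δ ∧
    ∀ x y z : X, ∀ gxy gyz gzx : ℝ → X,
      IsGeodesicSeg x y gxy → IsGeodesicSeg y z gyz → IsGeodesicSeg z x gzx →
      ∀ s ∈ Set.Icc (0:ℝ) (dist x y),
        ∃ p ∈ gyz '' Set.Icc (0:ℝ) (dist y z) ∪ gzx '' Set.Icc (0:ℝ) (dist z x),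
          dist (gxy s) p ≤ δ

/-- `L^∞(X)`: the Banach space of bounded real functions on `X` with sup norm. -/
abbrev Linfty (X : Type u) : Type u := lp (fun _ : X => ℝ) ⊤

/-- The Kuratowski embedding `x ↦ d(x,·) − d(x₀,·)` of `X` into `L^∞(X)`. -/
noncomputable def kuratowski (X : Type u) [MetricSpace X] (x₀ : X) (x : X) : Linfty X :=
  ⟨fun y => dist x y - dist x₀ y, memℓp_infty ⟨dist x x₀, by
    rintro t ⟨y, rfl⟩
    simpa [Real.norm_eq_abs] using abs_dist_sub_le x x₀ y⟩⟩

/-- `Y` admits a quadratic isoperimetric inequality for curves (with singular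
Lipschitz discs as fillings). -/
def QuadIsopSpace (Y : Type u) [MetricSpace Y] : Prop :=
  ∃ C > (0:ℝ), ∀ c : ℝ → Y, IsLipLoop c →
    ∃ φ : ℝ × ℝ → Y, BoundsLoop φ c ∧ lipArea φ ≤ C * (loopLength c) ^ 2

/-- `X` admits a disc-thickening with a quadratic isoperimetric inequality. -/
def HasDiscThickeningQII (X : Type u) [MetricSpace X] : Prop :=
  ∃ (X' : Type u) (m : MetricSpace X') (ι : X → X'),
    letI := m
    CompleteSpace X' ∧ Isometry ι ∧
      EMetric.hausdorffEdist (Set.range ι) (Set.univ : Set X') ≠ ⊤ ∧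
      QuadIsopSpace X'

/-!
`L^∞(X)` is an injective metric space: by McShane extension in each coordinate, the Kuratowski
embedding of `X` extends along `ι` to a `1`-Lipschitz map `F : Y → L^∞(X)`, and `F ∘ φ` is the
required disc. Distances to the loop do not increase. For the area, `F` does not increase
metric derivatives, so it enlarges their unit balls and thereby decreases the Jacobian pointwise.
To integrate this inequality one needs the Jacobian of a Lipschitz map to be integrable: it is
bounded, and it is measurable because the metric derivative, as an upper limit of continuous
functions of `(x, v)`, is a Borel function.
-/

open scoped Topology

section Extension

lemma lipschitzWith_kuratowski {X : Type u} [MetricSpace X] (x₀ : X) :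
    LipschitzWith 1 (kuratowski X x₀) := by
  refine LipschitzWith.mk_one fun x x' => ?_
  rw [dist_eq_norm]
  refine lp.norm_le_of_forall_le dist_nonneg fun y => ?_
  have h_coord : (kuratowski X x₀ x - kuratowski X x₀ x') y = dist x y - dist x' y :=
    sub_sub_sub_cancel_right _ _ _
  rw [h_coord, Real.norm_eq_abs]
  exact abs_dist_sub_le x x' y

variable {X Y E α : Type*}

lemma exists_lipschitzWith_extend_lp_infty [MetricSpace X] [PseudoMetricSpace Y] {K L : ℝ≥0}
    {f : X → Y} (hf : AntilipschitzWith K f)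
    {g : X → lp (fun _ : α => ℝ) ⊤} (hg : LipschitzWith L g) :
    ∃ F : Y → lp (fun _ : α => ℝ) ⊤, LipschitzWith (L * K) F ∧ F ∘ f = g := by
  rcases isEmpty_or_nonempty X with hX | hX
  · exact ⟨0, LipschitzWith.const' 0, funext isEmptyElim⟩
  have h_inv : Set.RightInvOn (Function.invFun f) f (Set.range f) := by
    rintro _ ⟨x, rfl⟩
    exact Function.invFun_eq ⟨x, rfl⟩
  have h_lip : LipschitzOnWith (L * K) (g ∘ Function.invFun f) (Set.range f) :=
    hg.comp_lipschitzOnWith (lipschitzOnWith_iff_restrict.2 (hf.to_rightInvOn h_inv))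
  obtain ⟨F, hF, hF_eq⟩ := h_lip.extend_lp_infty
  refine ⟨F, hF, funext fun x => ?_⟩
  rw [Function.comp_apply, ← hF_eq (Set.mem_range_self x), Function.comp_apply,
    Function.leftInverse_invFun hf.injective x]

lemma infDist_image_le [PseudoMetricSpace Y] [PseudoMetricSpace E] {K : ℝ≥0} {f : Y → E}
    (hf : LipschitzWith K f) (y : Y) (s : Set Y) :
    Metric.infDist (f y) (f '' s) ≤ K * Metric.infDist y s := by
  rcases s.eq_empty_or_nonempty with rfl | hs
  · simp only [Set.image_empty, Metric.infDist_empty, mul_zero, le_refl]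
  have := hs.to_subtype
  rw [Metric.infDist_eq_iInf (x := y), Real.mul_iInf_of_nonneg K.coe_nonneg]
  refine le_ciInf fun z => ?_
  calc Metric.infDist (f y) (f '' s) ≤ dist (f y) (f z) :=
        Metric.infDist_le_dist_of_mem (Set.mem_image_of_mem f z.2)
    _ ≤ K * dist y z := hf.dist_le_mul y z

lemma BoundsLoop.comp [PseudoMetricSpace Y] [PseudoMetricSpace E] {K : ℝ≥0} {f : Y → E}
    (hf : LipschitzWith K f) {φ : ℝ × ℝ → Y} {γ : ℝ → Y} (hφ : BoundsLoop φ γ) :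
    BoundsLoop (f ∘ φ) (f ∘ γ) := by
  obtain ⟨⟨L, hL⟩, h_bdry⟩ := hφ
  exact ⟨⟨K * L, hf.comp_lipschitzOnWith hL⟩, fun s hs => congrArg f (h_bdry s hs)⟩

end Extension

section Jacobian

variable {s t : ℝ × ℝ → ℝ}

lemma jac2_nonneg (s : ℝ × ℝ → ℝ) : 0 ≤ jac2 s := by
  rw [jac2]
  split_ifs
  · exact div_nonneg Real.pi_pos.le ENNReal.toReal_nonneg
  · exact le_rfl

lemma jac2_mono (hst : ∀ v, s v ≤ t v) (ht : volume {v | t v ≤ 1} ≠ 0) : jac2 s ≤ jac2 t := by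
  have h_vol : volume {v | t v ≤ 1} ≤ volume {v | s v ≤ 1} :=
    measure_mono fun v hv => (hst v).trans hv
  by_cases hs : volume {v | s v ≤ 1} < ⊤
  · have ht' : volume {v | t v ≤ 1} < ⊤ := h_vol.trans_lt hs
    rw [jac2, jac2, if_pos hs, if_pos ht']
    exact div_le_div_of_nonneg_left Real.pi_pos.le (ENNReal.toReal_pos ht ht'.ne)
      (ENNReal.toReal_mono hs.ne h_vol)
  · rw [jac2, if_neg hs]
    exact jac2_nonneg t

lemma measurable_jac2 {α : Type*} [MeasurableSpace α] {s : α → ℝ × ℝ → ℝ}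
    (hs : Measurable (Function.uncurry s)) : Measurable fun a => jac2 (s a) := by
  have h_vol : Measurable fun a => volume {v | s a v ≤ 1} :=
    measurable_measure_prodMk_left (measurableSet_le hs measurable_const)
  exact Measurable.ite (measurableSet_lt h_vol measurable_const)
    (measurable_const.div h_vol.ennreal_toReal) measurable_const

lemma volume_mul_norm_le_one_ne_zero (K : ℝ) : volume {v : ℝ × ℝ | K * ‖v‖ ≤ 1} ≠ 0 := by
  have h_cont : ContinuousAt (fun v : ℝ × ℝ => K * ‖v‖) 0 := by fun_prop
  have h_zero : K * ‖(0 : ℝ × ℝ)‖ < 1 := by simp only [norm_zero, mul_zero, zero_lt_one]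
  have h_nhds : {v : ℝ × ℝ | K * ‖v‖ ≤ 1} ∈ 𝓝 0 :=
    (h_cont.eventually_lt_const h_zero).mono fun _ => le_of_lt
  exact (Measure.measure_pos_of_mem_nhds volume h_nhds).ne'

end Jacobian

section MetricDerivative

lemma isGδ_frequently_mem {α β : Type*} [TopologicalSpace β] {l : Filter α}
    [l.IsCountablyGenerated] {A : α → Set β} (hA : ∀ a, IsOpen (A a)) :
    IsGδ {b | ∃ᶠ a in l, b ∈ A a} := by
  obtain ⟨S, hS⟩ := l.exists_antitone_basis
  have h_eq : {b | ∃ᶠ a in l, b ∈ A a} = ⋂ n, ⋃ a ∈ S n, A a := by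
    ext b
    simp only [Set.mem_ofPred_eq, hS.1.frequently_iff, true_imp_iff, Set.mem_iInter,
      Set.mem_iUnion, exists_prop]
  rw [h_eq]
  exact IsGδ.iInter_of_isOpen fun n => isOpen_biUnion fun a _ => hA a

variable {Z W : Type*} [PseudoMetricSpace Z] [PseudoMetricSpace W]
  {φ : ℝ × ℝ → Z} {ψ : ℝ × ℝ → W} {U : Set (ℝ × ℝ)} {K : ℝ≥0} {x : ℝ × ℝ}

lemma eventually_add_smul_mem (hU : U ∈ 𝓝 x) (v : ℝ × ℝ) :
    ∀ᶠ r : ℝ in 𝓝[>] 0, x + r • v ∈ U := by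
  have h_cont : ContinuousAt (fun r : ℝ => x + r • v) 0 := by fun_prop
  refine nhdsWithin_le_nhds (h_cont ?_)
  simpa only [zero_smul, add_zero] using hU

lemma isCoboundedUnder_dist_div (φ : ℝ × ℝ → Z) (x v : ℝ × ℝ) :
    IsCoboundedUnder (· ≤ ·) (𝓝[>] (0 : ℝ)) fun r => dist (φ (x + r • v)) (φ x) / r := by
  refine IsBoundedUnder.isCoboundedUnder_le (isBoundedUnder_of_eventually_ge (a := 0) ?_)
  filter_upwards [self_mem_nhdsWithin] with r hr
  exact div_nonneg dist_nonneg (le_of_lt hr)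

lemma eventually_dist_div_le (hφ : LipschitzOnWith K φ U) (hU : U ∈ 𝓝 x) (v : ℝ × ℝ) :
    ∀ᶠ r : ℝ in 𝓝[>] 0, dist (φ (x + r • v)) (φ x) / r ≤ K * ‖v‖ := by
  filter_upwards [eventually_add_smul_mem hU v, self_mem_nhdsWithin] with r hrU (hr : 0 < r)
  rw [div_le_iff₀ hr]
  calc dist (φ (x + r • v)) (φ x) ≤ K * dist (x + r • v) x :=
        hφ.dist_le_mul _ hrU _ (mem_of_mem_nhds hU)
    _ = K * ‖v‖ * r := by
        rw [dist_self_add_left, norm_smul, Real.norm_of_nonneg hr.le, mul_comm r, mul_assoc]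

lemma isBoundedUnder_dist_div (hφ : LipschitzOnWith K φ U) (hU : U ∈ 𝓝 x) (v : ℝ × ℝ) :
    IsBoundedUnder (· ≤ ·) (𝓝[>] (0 : ℝ)) fun r => dist (φ (x + r • v)) (φ x) / r :=
  isBoundedUnder_of_eventually_le (eventually_dist_div_le hφ hU v)

lemma mder_le_mul_norm (hφ : LipschitzOnWith K φ U) (hU : U ∈ 𝓝 x) (v : ℝ × ℝ) :
    mder φ x v ≤ K * ‖v‖ :=
  limsup_le_of_le (isCoboundedUnder_dist_div φ x v) (eventually_dist_div_le hφ hU v)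

lemma mder_mono (hφ : LipschitzOnWith K φ U) (hU : U ∈ 𝓝 x)
    (hψφ : ∀ a ∈ U, ∀ b ∈ U, dist (ψ a) (ψ b) ≤ dist (φ a) (φ b)) (v : ℝ × ℝ) :
    mder ψ x v ≤ mder φ x v := by
  refine limsup_le_limsup ?_ (isCoboundedUnder_dist_div ψ x v) (isBoundedUnder_dist_div hφ hU v)
  filter_upwards [eventually_add_smul_mem hU v, self_mem_nhdsWithin] with r hrU (hr : 0 < r)
  exact div_le_div_of_nonneg_right (hψφ _ hrU _ (mem_of_mem_nhds hU)) hr.le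

lemma volume_mder_le_one_ne_zero (hφ : LipschitzOnWith K φ U) (hU : U ∈ 𝓝 x) :
    volume {v | mder φ x v ≤ 1} ≠ 0 := by
  have h_sub : {v : ℝ × ℝ | K * ‖v‖ ≤ 1} ⊆ {v | mder φ x v ≤ 1} :=
    fun v hv => (mder_le_mul_norm hφ hU v).trans hv
  exact fun h => volume_mul_norm_le_one_ne_zero K (measure_mono_null h_sub h)

lemma jac2_mder_le (hφ : LipschitzOnWith K φ U) (hU : U ∈ 𝓝 x) :
    jac2 (mder φ x) ≤ jac2 fun v => K * ‖v‖ :=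
  jac2_mono (mder_le_mul_norm hφ hU) (volume_mul_norm_le_one_ne_zero K)

lemma jac2_mder_mono (hφ : LipschitzOnWith K φ U) (hU : U ∈ 𝓝 x)
    (hψφ : ∀ a ∈ U, ∀ b ∈ U, dist (ψ a) (ψ b) ≤ dist (φ a) (φ b)) :
    jac2 (mder ψ x) ≤ jac2 (mder φ x) :=
  jac2_mono (mder_mono hφ hU hψφ) (volume_mder_le_one_ne_zero hφ hU)

/- For small `r` the condition `x + r • v ∈ U` holds anyway; it confines `φ` to the set where it is
continuous, so that each right-hand condition is open in `(x, v)`. -/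
lemma lt_mder_iff (hφ : LipschitzOnWith K φ U) (hU : U ∈ 𝓝 x) (v : ℝ × ℝ) (c : ℝ) :
    c < mder φ x v ↔ ∃ d : ℚ, c < d ∧
      ∃ᶠ r : ℝ in 𝓝[>] 0, x + r • v ∈ U ∧ d < dist (φ (x + r • v)) (φ x) / r := by
  constructor
  · intro hc
    obtain ⟨d, hcd, hd⟩ := exists_rat_btwn hc
    have h_freq := frequently_lt_of_lt_limsup (isCoboundedUnder_dist_div φ x v) hd
    exact ⟨d, hcd, (eventually_add_smul_mem hU v).and_frequently h_freq⟩
  · rintro ⟨d, hcd, h_freq⟩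
    exact hcd.trans_le <| le_limsup_of_frequently_le (h_freq.mono fun _ h => h.2.le)
      (isBoundedUnder_dist_div hφ hU v)

lemma isOpen_mem_and_lt_dist_div (hU : IsOpen U) (hφ : ContinuousOn φ U) (r d : ℝ) :
    IsOpen {q : U × (ℝ × ℝ) | q.1 + r • q.2 ∈ U ∧ d < dist (φ (q.1 + r • q.2)) (φ q.1) / r} := by
  have h_add : Continuous fun q : U × (ℝ × ℝ) => (q.1 : ℝ × ℝ) + r • q.2 := by fun_prop
  have h_base : Continuous fun q : U × (ℝ × ℝ) => φ q.1 :=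
    (continuousOn_iff_continuous_domRestrict.1 hφ).comp continuous_fst
  have h_quot : ContinuousOn
      (fun q : U × (ℝ × ℝ) => dist (φ (q.1 + r • q.2)) (φ q.1) / r) {q | ↑q.1 + r • q.2 ∈ U} :=
    (continuous_dist.comp_continuousOn ((hφ.comp h_add.continuousOn fun _ hq => hq).prodMk
      h_base.continuousOn)).div_const r
  exact h_quot.isOpen_inter_preimage (hU.preimage h_add) isOpen_Ioi

lemma measurable_mder (hU : IsOpen U) (hφ : LipschitzOnWith K φ U) :
    Measurable fun q : U × (ℝ × ℝ) => mder φ q.1 q.2 := by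
  refine measurable_of_Ioi fun c => ?_
  have h_eq : (fun q : U × (ℝ × ℝ) => mder φ q.1 q.2) ⁻¹' Set.Ioi c =
      ⋃ (d : ℚ) (_ : c < d), {q : U × (ℝ × ℝ) | ∃ᶠ r : ℝ in 𝓝[>] 0,
        ↑q.1 + r • q.2 ∈ U ∧ d < dist (φ (q.1 + r • q.2)) (φ q.1) / r} := by
    ext q
    simp only [Set.mem_preimage, Set.mem_Ioi, lt_mder_iff hφ (hU.mem_nhds q.1.2),
      Set.mem_iUnion, exists_prop, Set.mem_ofPred_eq]
  rw [h_eq]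
  refine MeasurableSet.iUnion fun d => MeasurableSet.iUnion fun _ => ?_
  exact (isGδ_frequently_mem
    fun r => isOpen_mem_and_lt_dist_div hU hφ.continuousOn r d).measurableSet

lemma integrableOn_jac2_mder (hU : IsOpen U) (hU_fin : volume U ≠ ⊤)
    (hφ : LipschitzOnWith K φ U) : IntegrableOn (fun x => jac2 (mder φ x)) U := by
  have h_meas : AEStronglyMeasurable (fun x => jac2 (mder φ x)) (volume.restrict U) :=
    ((aemeasurable_restrict_iff_comap_subtype hU.measurableSet).2
      (measurable_jac2 (measurable_mder hU hφ)).aemeasurable).aestronglyMeasurable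
  refine IntegrableOn.of_bound hU_fin.lt_top h_meas (jac2 fun v => K * ‖v‖) ?_
  refine ae_restrict_of_forall_mem hU.measurableSet fun x hx => ?_
  rw [Real.norm_of_nonneg (jac2_nonneg _)]
  exact jac2_mder_le hφ (hU.mem_nhds hx)

lemma setIntegral_jac2_mder_mono (hU : IsOpen U) (hU_fin : volume U ≠ ⊤)
    (hφ : LipschitzOnWith K φ U)
    (hψφ : ∀ a ∈ U, ∀ b ∈ U, dist (ψ a) (ψ b) ≤ dist (φ a) (φ b)) :
    ∫ x in U, jac2 (mder ψ x) ≤ ∫ x in U, jac2 (mder φ x) :=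
  integral_mono_of_nonneg (Eventually.of_forall fun _ => jac2_nonneg _)
    (integrableOn_jac2_mder hU hU_fin hφ)
    (ae_restrict_of_forall_mem hU.measurableSet
      fun _ hx => jac2_mder_mono hφ (hU.mem_nhds hx) hψφ)

end MetricDerivative

section Area

lemma convex_D2 : Convex ℝ D2 := by
  have h_sq : ConvexOn ℝ Set.univ fun t : ℝ => t ^ 2 := even_two.convexOn_pow
  have h_sum : ConvexOn ℝ Set.univ fun p : ℝ × ℝ => p.1 ^ 2 + p.2 ^ 2 :=
    (h_sq.comp_linearMap (LinearMap.fst ℝ ℝ ℝ)).add (h_sq.comp_linearMap (LinearMap.snd ℝ ℝ ℝ))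
  unfold D2
  simpa only [Set.mem_univ, true_and] using h_sum.convex_le 1

lemma isBounded_D2 : Bornology.IsBounded D2 := by
  refine Metric.isBounded_closedBall.subset (s := D2) (t := Metric.closedBall 0 1) ?_
  intro p (hp : p.1 ^ 2 + p.2 ^ 2 ≤ 1)
  rw [mem_closedBall_zero_iff, norm_prod_le_iff, Real.norm_eq_abs, Real.norm_eq_abs,
    ← sq_le_one_iff_abs_le_one, ← sq_le_one_iff_abs_le_one]
  exact ⟨by linarith [sq_nonneg p.2], by linarith [sq_nonneg p.1]⟩

variable {Z W : Type*} [PseudoMetricSpace Z] [PseudoMetricSpace W] {φ : ℝ × ℝ → Z}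

lemma lipArea_eq_setIntegral_interior (φ : ℝ × ℝ → Z) :
    lipArea φ = ∫ x in interior D2, jac2 (mder φ x) :=
  (setIntegral_congr_set
    (interior_ae_eq_of_null_frontier (convex_D2.addHaar_frontier volume))).symm

lemma lipArea_mono {ψ : ℝ × ℝ → W} {K : ℝ≥0} (hφ : LipschitzOnWith K φ D2)
    (hψφ : ∀ a ∈ D2, ∀ b ∈ D2, dist (ψ a) (ψ b) ≤ dist (φ a) (φ b)) :
    lipArea ψ ≤ lipArea φ := by
  rw [lipArea_eq_setIntegral_interior, lipArea_eq_setIntegral_interior]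
  exact setIntegral_jac2_mder_mono isOpen_interior
    (isBounded_D2.subset interior_subset).measure_lt_top.ne (hφ.mono interior_subset)
    fun a ha b hb => hψφ a (interior_subset ha) b (interior_subset hb)

lemma lipArea_comp_le {f : Z → W} (hf : LipschitzWith 1 f) {K : ℝ≥0}
    (hφ : LipschitzOnWith K φ D2) : lipArea (f ∘ φ) ≤ lipArea φ :=
  lipArea_mono hφ fun a _ b _ => by
    simpa only [NNReal.coe_one, one_mul, Function.comp_apply] using hf.dist_le_mul (φ a) (φ b)

end Area

theorem Linfty_fillings_general {X : Type u} [MetricSpace X] (x₀ : X)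
    {Y : Type v} [PseudoMetricSpace Y] (ι : X → Y) (hι : AntilipschitzWith 1 ι) :
    ∃ F : Y → Linfty X, ∀ (γ : ℝ → X) (φ : ℝ × ℝ → Y), BoundsLoop φ (fun s => ι (γ s)) →
      BoundsLoop (F ∘ φ) (fun s => kuratowski X x₀ (γ s)) ∧
      lipArea (F ∘ φ) ≤ lipArea φ ∧
      ∀ w, Metric.infDist (F (φ w)) (kuratowski X x₀ '' (γ '' Set.Icc 0 1)) ≤
        Metric.infDist (φ w) (ι '' (γ '' Set.Icc 0 1)) := by
  obtain ⟨F, hF, hFι⟩ := exists_lipschitzWith_extend_lp_infty hι (lipschitzWith_kuratowski x₀)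
  rw [one_mul] at hF
  refine ⟨F, fun γ φ hφ => ?_⟩
  obtain ⟨K, hK⟩ := hφ.1
  rw [← hFι, Set.image_comp]
  refine ⟨hφ.comp hF, lipArea_comp_le hF hK, fun w => ?_⟩
  simpa only [NNReal.coe_one, one_mul] using infDist_image_le hF (φ w) (ι '' (γ '' Set.Icc 0 1))

/-- Lemma 2.3: if `X` embeds isometrically in `Y` via `ι` and a
Lipschitz loop `γ` in `X` bounds a singular Lipschitz disc `φ` in `Y`, then `κ ∘ γ`
bounds a singular Lipschitz disc `φ'` in `L^∞(X)` with `Area(φ') ≤ Area(φ)` whose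
filling radius is no larger: any `R` bounding all distances `dist(φ(w), ι(γ([0,1])))`
(`w ∈ D²`) also bounds all distances `dist(φ'(w), κ(γ([0,1])))`. -/
theorem Linfty_fillings {X : Type u} [MetricSpace X] (x₀ : X)
    {Y : Type v} [MetricSpace Y] (ι : X → Y) (hι : Isometry ι)
    (γ : ℝ → X) (hγ : IsLipLoop γ)
    (φ : ℝ × ℝ → Y) (hφ : BoundsLoop φ (fun s => ι (γ s))) :
    ∃ φ' : ℝ × ℝ → Linfty X,
      BoundsLoop φ' (fun s => kuratowski X x₀ (γ s)) ∧
      lipArea φ' ≤ lipArea φ ∧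
      ∀ R : ℝ, (∀ w ∈ D2, Metric.infDist (φ w) (ι '' (γ '' Set.Icc 0 1)) ≤ R) →
        ∀ w ∈ D2, Metric.infDist (φ' w) (kuratowski X x₀ '' (γ '' Set.Icc 0 1)) ≤ R := by
  obtain ⟨F, hF⟩ := Linfty_fillings_general x₀ ι hι.antilipschitz
  obtain ⟨h_bounds, h_area, h_dist⟩ := hF γ φ hφ
  exact ⟨F ∘ φ, h_bounds, h_area, fun R hR w hw => (h_dist w).trans (hR w hw)⟩

end SharpIsop
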